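/- Every weak-QFT subshift contains a periodic point; in particular, a weak-QFT is never topologically minimal. -/

import Mathlib

open Filter Set MeasureTheory

namespace QFTPaper

variable {A : Type*} {B : Type*}

/-- The left shift on bi-infinite sequences over the alphabet `A`. -/
def shift (x : ℤ → A) : ℤ → A := fun n => x (n + 1)

/-- A subshift: a closed, shift-invariant subset of `A^ℤ`. -/
def IsSubshift [TopologicalSpace A] (X : Set (ℤ → A)) : Prop :=
  IsClosed X ∧ shift '' X = X

/-- The finite word `w` occurs in `x` at position `k`. -/
def OccursAt (w : List A) (x : ℤ → A) (k : ℤ) : Prop :=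
  ∀ i : Fin w.length, x (k + (i : ℕ)) = w.get i

/-- The language of `X`: words of length `n` occurring in elements of `X`
(at position `0`, which is no restriction by shift-invariance). -/
def Lang (X : Set (ℤ → A)) (n : ℕ) : Set (List A) :=
  { w | w.length = n ∧ ∃ x ∈ X, OccursAt w x 0 }

/-- Topological entropy of a subshift. -/
noncomputable def hTop (X : Set (ℤ → A)) : ℝ :=
  limsup (fun n : ℕ => Real.log (Nat.card ↥(Lang X n)) / (n : ℝ)) atTop

/-- Follower set of the finite word `w = A₋ₙ…A₀` (listed from `A₋ₙ` to `A₀`):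
the set of one-sided sequences `B₀B₁B₂…` with `B ∈ X` and `B₋ₙ…B₀ = A₋ₙ…A₀`,
realized by requiring `w` to occur in `B` at positions `0,…,n` and reading off
the tail of `B` starting at the position of the last letter of `w`.
For the empty word this gives `X₊` (by shift-invariance). -/
def fol (X : Set (ℤ → A)) (w : List A) : Set (ℕ → A) :=
  { y | ∃ B ∈ X, (∀ i : Fin w.length, B ((i : ℕ) : ℤ) = w.get i) ∧
        ∀ k : ℕ, y k = B ((w.length : ℤ) - 1 + (k : ℤ)) }

/-- `w = A₋ₙ…A₀` is a left constraint:
`∅ ≠ fol(A₋ₙ…A₀) ⊊ fol(A₋ₙ₊₁…A₀)`. -/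
def IsLeftConstraint (X : Set (ℤ → A)) (w : List A) : Prop :=
  w ≠ [] ∧ fol X w ≠ ∅ ∧ fol X w ⊂ fol X w.tail

/-- `𝒞(X, n)`: the set of left constraints of length `n`. -/
def LC (X : Set (ℤ → A)) (n : ℕ) : Set (List A) :=
  { w | w.length = n ∧ IsLeftConstraint X w }

/-- The left constraint entropy `h_𝒞(X) = limsup (1/n) log⁺ #𝒞(X,n)`. -/
noncomputable def hC (X : Set (ℤ → A)) : ℝ :=
  limsup (fun n : ℕ => max 0 (Real.log (Nat.card ↥(LC X n))) / (n : ℝ)) atTop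

/-- The time-reversed subshift `X̄`. -/
def rev (X : Set (ℤ → A)) : Set (ℤ → A) :=
  (fun x : ℤ → A => fun n : ℤ => x (-n)) '' X

/-- The symmetric constraint entropy `h_𝒮𝒞(X) = min (h_𝒞(X), h_𝒞(X̄))`. -/
noncomputable def hSC (X : Set (ℤ → A)) : ℝ := min (hC X) (hC (rev X))

/-- Subshift of quasi-finite type: `h_𝒮𝒞(X) < h_top(X)`. -/
def IsQFT [TopologicalSpace A] (X : Set (ℤ → A)) : Prop :=
  IsSubshift X ∧ hSC X < hTop X

/-- The word `B₋ₘ…B₀` read off from a one-sided past `b` (where `b j = B₋ⱼ`). -/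
def wordOf (b : ℕ → A) (m : ℕ) : List A :=
  (List.range (m + 1)).map fun j => b (m - j)

/-- An extendable left constraint: a left constraint `A₋ₙ…A₀` which admits a
one-sided past `B` extending it such that `B₋ₘ…B₀` is again a left constraint
for infinitely many `m`. -/
def IsExtendable (X : Set (ℤ → A)) (w : List A) : Prop :=
  IsLeftConstraint X w ∧
  ∃ b : ℕ → A, wordOf b (w.length - 1) = w ∧
    ∀ N : ℕ, ∃ m, N ≤ m ∧ IsLeftConstraint X (wordOf b m)

/-- `𝒞*(X, n)`: the set of extendable left constraints of length `n`. -/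
def ELC (X : Set (ℤ → A)) (n : ℕ) : Set (List A) :=
  { w | w.length = n ∧ IsExtendable X w }

/-- The extendable left constraint entropy `h*_𝒞(X)`. -/
noncomputable def hCstar (X : Set (ℤ → A)) : ℝ :=
  limsup (fun n : ℕ => Real.log (Nat.card ↥(ELC X n)) / (n : ℝ)) atTop

/-- `h*_𝒮𝒞(X) = min (h*_𝒞(X), h*_𝒞(X̄))`. -/
noncomputable def hSCstar (X : Set (ℤ → A)) : ℝ := min (hCstar X) (hCstar (rev X))

/-- Subshift of weak quasi-finite type: `h*_𝒮𝒞(X) < h_top(X)`. -/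
def IsWeakQFT [TopologicalSpace A] (X : Set (ℤ → A)) : Prop :=
  IsSubshift X ∧ hSCstar X < hTop X

/-- Subshift of finite type: defined by excluding a finite set of finite words. -/
def IsSFT (X : Set (ℤ → A)) : Prop :=
  ∃ F : Finset (List A), X = { x | ∀ w ∈ F, ∀ k : ℤ, ¬ OccursAt w x k }

/-- Sofic subshift: the image of an SFT under a continuous shift-commuting map. -/
def IsSofic [TopologicalSpace A] (X : Set (ℤ → A)) : Prop :=
  ∃ (B : Type) (_ : Fintype B) (Y : Set (ℤ → B)) (π : (ℤ → B) → (ℤ → A)),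
    IsSFT Y ∧
    (letI : TopologicalSpace B := ⊥
     Continuous π) ∧
    (∀ x : ℤ → B, π (shift x) = shift (π x)) ∧ π '' Y = X


/-- Topological conjugacy of subshifts: a homeomorphism commuting with the shifts. -/
def Conjugate [TopologicalSpace A] [TopologicalSpace B]
    (X : Set (ℤ → A)) (Y : Set (ℤ → B)) : Prop :=
  ∃ φ : X ≃ₜ Y, ∀ x x' : X, (x' : ℤ → A) = shift (x : ℤ → A) →
    (φ x' : ℤ → B) = shift (φ x : ℤ → B)

/-- The cylinder of a word of length `n` placed at positions `0,…,n-1`. -/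
def cylSet (n : ℕ) (w : Fin n → A) : Set (ℤ → A) :=
  { x | ∀ i : Fin n, x ((i : ℕ) : ℤ) = w i }

/-- Entropy of the partition of `A^ℤ` into cylinders of length `n`. -/
noncomputable def blockEntropy [Fintype A] [MeasurableSpace A]
    (μ : Measure (ℤ → A)) (n : ℕ) : ℝ :=
  ∑ w : Fin n → A, Real.negMulLog ((μ (cylSet n w)).toReal)

/-- Kolmogorov–Sinai entropy of a shift-invariant measure on `A^ℤ`,
computed with the natural (generating) partition into cylinders. -/
noncomputable def KSEntropy [Fintype A] [MeasurableSpace A]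
    (μ : Measure (ℤ → A)) : ℝ :=
  ⨅ n : ℕ, blockEntropy μ (n + 1) / (n + 1)

/-- A maximum measure: an ergodic shift-invariant Borel probability measure
carried by `X` whose Kolmogorov–Sinai entropy equals the topological entropy of `X`. -/
def IsMaxMeasure [Fintype A] [MeasurableSpace A]
    (X : Set (ℤ → A)) (μ : Measure (ℤ → A)) : Prop :=
  IsProbabilityMeasure μ ∧ μ Xᶜ = 0 ∧ Ergodic shift μ ∧ KSEntropy μ = hTop X

/-- The number of points of `X` fixed by the `n`-th power of the shift. -/
noncomputable def perCount (X : Set (ℤ → A)) (n : ℕ) : ℕ :=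
  Nat.card {x : ℤ → A | x ∈ X ∧ shift^[n] x = x}

/-- The (two-sided) shift orbit of a point. -/
def orbit (x : ℤ → A) : Set (ℤ → A) :=
  { y | ∃ n : ℕ, shift^[n] x = y ∨ shift^[n] y = x }

/-- A topologically minimal subshift: nonempty and every orbit is dense. -/
def IsMinimal [TopologicalSpace A] (X : Set (ℤ → A)) : Prop :=
  X.Nonempty ∧ ∀ x ∈ X, X ⊆ closure (orbit x)


/-! ### Words of points -/

/-- The word of length `n` of `x` starting at position `s`. -/
def wd (x : ℤ → A) (s : ℤ) (n : ℕ) : List A := (List.range n).map fun i : ℕ => x (s + (i : ℤ))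

/-- Translate of a point. -/
def tr (k : ℤ) (x : ℤ → A) : ℤ → A := fun n => x (k + n)

theorem wd_length (x : ℤ → A) (s : ℤ) (n : ℕ) : (wd x s n).length = n := by simp [wd]

theorem wd_tr (x : ℤ → A) (k s : ℤ) (n : ℕ) : wd (tr k x) s n = wd x (k + s) n := by
  simp [wd, tr, add_assoc]

theorem wd_eq_iff (x y : ℤ → A) (s t : ℤ) (n : ℕ) :
    wd x s n = wd y t n ↔ ∀ i : ℕ, i < n → x (s + i) = y (t + i) := by
  simp [wd]

theorem wd_add (x : ℤ → A) (s : ℤ) (m n : ℕ) :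
    wd x s (m + n) = wd x s m ++ wd x (s + m) n := by
  simp [wd, List.range_add, add_assoc]

theorem wd_succ_tail (x : ℤ → A) (s : ℤ) (n : ℕ) : (wd x s (n + 1)).tail = wd x (s + 1) n := by
  have h := wd_add x s 1 n
  rw [add_comm 1 n] at h
  rw [h]
  simp [wd]

theorem wd_reverse (x : ℤ → A) (s : ℤ) (n : ℕ) :
    (wd x s n).reverse = wd (fun i => x (-i)) (1 - s - n) n := by
  apply List.ext_getElem
  · simp [wd]
  · intro i h1 h2
    simp only [wd, List.length_map, List.length_range] at h2
    simp only [wd, List.getElem_reverse, List.getElem_map, List.getElem_range, List.length_map,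
      List.length_range]
    congr 1
    omega

theorem wordOf_eq (x : ℤ → A) (k : ℤ) (m : ℕ) :
    wordOf (fun j : ℕ => x (k - j)) m = wd x (k - m) (m + 1) := by
  unfold wordOf wd
  apply List.map_congr_left
  intro i hi
  have : i < m + 1 := by simpa using hi
  show x (k - ((m - i : ℕ) : ℤ)) = x (k - m + i)
  congr 1
  omega

theorem mem_fol_wd (X : Set (ℤ → A)) (x : ℤ → A) (s : ℤ) (n : ℕ) (y : ℕ → A) :
    y ∈ fol X (wd x s n) ↔ ∃ B ∈ X, (∀ i : ℕ, i < n → B i = x (s + i)) ∧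
      ∀ k : ℕ, y k = B ((n : ℤ) - 1 + k) := by
  unfold fol
  simp only [Set.mem_ofPred_eq, wd_length]
  refine exists_congr fun B => and_congr_right fun _ => and_congr_left fun _ => ?_
  constructor
  · intro h i hi
    have := h ⟨i, by simpa [wd_length] using hi⟩
    simpa [wd] using this
  · intro h i
    have := h i (by simpa [wd_length] using i.2)
    rw [this, List.get_eq_getElem]
    simp [wd]

theorem lang_eq (X : Set (ℤ → A)) (n : ℕ) : Lang X n = {w | ∃ x ∈ X, w = wd x 0 n} := by
  ext w
  constructor
  · rintro ⟨hl, x, hx, ho⟩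
    refine ⟨x, hx, ?_⟩
    apply List.ext_getElem
    · simp [wd, hl]
    · intro i h1 h2
      have := ho ⟨i, h1⟩
      simpa [wd] using this.symm
  · rintro ⟨x, hx, rfl⟩
    refine ⟨wd_length _ _ _, x, hx, ?_⟩
    intro i
    rw [List.get_eq_getElem]
    simp [wd]

theorem tr_mem {X : Set (ℤ → A)} (hX : shift '' X = X) {x : ℤ → A} (hx : x ∈ X) (k : ℤ) :
    tr k x ∈ X := by
  have h1 : ∀ y ∈ X, tr 1 y ∈ X := by
    intro y hy
    have : shift y ∈ X := by rw [← hX]; exact ⟨y, hy, rfl⟩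
    convert this using 1
    funext n; simp [tr, shift, add_comm]
  have h2 : ∀ y ∈ X, tr (-1) y ∈ X := by
    intro y hy
    rw [← hX] at hy
    obtain ⟨z, hz, rfl⟩ := hy
    convert hz using 1
    funext n; simp [tr, shift]
  induction k using Int.induction_on with
  | zero => convert hx using 1; funext n; simp [tr]
  | succ i ih =>
    have := h1 _ ih
    convert this using 1
    funext n; simp [tr, add_assoc]
  | pred i ih =>
    have := h2 _ ih
    convert this using 1
    funext n; simp only [tr]; congr 1; ring

theorem fol_wd_nonempty {X : Set (ℤ → A)} (hX : shift '' X = X) {x : ℤ → A} (hx : x ∈ X)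
    (s : ℤ) (n : ℕ) : (fol X (wd x s n)).Nonempty := by
  refine ⟨fun k => x (s + ((n : ℤ) - 1 + k)), ?_⟩
  rw [mem_fol_wd]
  exact ⟨tr s x, tr_mem hX hx s, fun i _ => rfl, fun k => rfl⟩

theorem fol_wd_succ {X : Set (ℤ → A)} (hX : shift '' X = X) {x : ℤ → A} (hx : x ∈ X)
    (s : ℤ) (n : ℕ) (h : ¬ IsLeftConstraint X (wd x s (n + 1))) :
    fol X (wd x (s + 1) n) = fol X (wd x s (n + 1)) := by
  have hsub : fol X (wd x s (n + 1)) ⊆ fol X (wd x (s + 1) n) := by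
    intro y hy
    rw [mem_fol_wd] at hy ⊢
    obtain ⟨B, hB, h1, h2⟩ := hy
    refine ⟨tr 1 B, tr_mem hX hB 1, ?_, ?_⟩
    · intro i hi
      have := h1 (i + 1) (by omega)
      simp only [tr]
      push_cast at this
      rw [add_comm 1 (i : ℤ), this]
      congr 1; ring
    · intro k
      rw [h2 k]
      simp only [tr]
      congr 1; push_cast; ring
  by_contra hne
  apply h
  refine ⟨?_, ?_, ?_⟩
  · intro h0
    have := congrArg List.length h0
    simp [wd_length] at this
  · exact (fol_wd_nonempty hX hx s (n + 1)).ne_empty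
  · rw [wd_succ_tail]
    exact lt_of_le_of_ne hsub (fun h => hne h.symm)

theorem fol_wd_stable {X : Set (ℤ → A)} (hX : shift '' X = X) {x : ℤ → A} (hx : x ∈ X)
    (e : ℤ) (l m : ℕ)
    (h : ∀ n : ℕ, l < n → n ≤ l + m → ¬ IsLeftConstraint X (wd x (e - n) n)) :
    fol X (wd x (e - (l + m : ℕ)) (l + m)) = fol X (wd x (e - l) l) := by
  induction m with
  | zero => simp
  | succ m ih =>
    rw [← ih (fun n h1 h2 => h n h1 (by omega))]
    have := h (l + m + 1) (by omega) (by omega)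
    have h2 := fol_wd_succ hX hx _ _ this
    rw [show e - ((l + (m + 1) : ℕ) : ℤ) = e - ((l + m + 1 : ℕ) : ℤ) by push_cast; ring]
    rw [← add_assoc, ← h2]
    congr 2
    push_cast; ring

/-! ### Loops give periodic points -/

theorem periodic_of_loop [TopologicalSpace A] [DiscreteTopology A]
    {X : Set (ℤ → A)} (hX : IsSubshift X) {F : Set (ℕ → A)} (hne : F.Nonempty)
    (hF : ∀ y ∈ F, ∃ B ∈ X, ∀ k : ℕ, y k = B k) (p : ℕ) (hp : 1 ≤ p) (v : ℕ → A)
    (hl : ∀ y ∈ F, ∃ z ∈ F, (∀ i < p, z i = v i) ∧ ∀ k, z (p + k) = y k) :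
    ∃ x ∈ X, ∃ n : ℕ, 1 ≤ n ∧ shift^[n] x = x := by
  have key : ∀ n : ℕ, ∃ z ∈ F, ∀ i < n * p, z i = v (i % p) := by
    intro n
    induction n with
    | zero => obtain ⟨y, hy⟩ := hne; exact ⟨y, hy, fun i hi => by omega⟩
    | succ n ih =>
      obtain ⟨y, hy, h1⟩ := ih
      obtain ⟨z, hz, h2, h3⟩ := hl y hy
      refine ⟨z, hz, fun i hi => ?_⟩
      by_cases hip : i < p
      · rw [h2 i hip, Nat.mod_eq_of_lt hip]
      · obtain ⟨k, rfl⟩ := Nat.exists_eq_add_of_le (not_lt.mp hip)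
        rw [h3, h1 k (by rw [add_mul] at hi; omega)]
        simp
  have hp' : (0 : ℤ) < p := by omega
  set q : ℤ → A := fun i => v ((i % (p : ℤ)).toNat) with hq
  have key2 : ∀ n : ℕ, ∃ B ∈ X, ∀ i : ℤ, -(n : ℤ) ≤ i → i < n → B i = q i := by
    intro n
    obtain ⟨z, hz, h1⟩ := key (2 * n)
    obtain ⟨B, hB, h2⟩ := hF z hz
    refine ⟨tr (n * p) B, tr_mem hX.2 hB _, ?_⟩
    intro i hi1 hi2
    simp only [tr, hq]
    have hnp : (n : ℤ) ≤ n * p := by nlinarith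
    obtain ⟨m, hm⟩ := Int.eq_ofNat_of_zero_le (show 0 ≤ (n : ℤ) * p + i by omega)
    rw [hm, ← h2 m, h1 m]
    · congr 1
      have : i % (p : ℤ) = (m : ℤ) % p := by
        rw [← hm]; simp
      rw [this]
      norm_cast
    · have : (m : ℤ) < 2 * n * p := by rw [← hm]; nlinarith
      exact_mod_cast this
  choose B hB1 hB2 using key2
  refine ⟨q, ?_, p, hp, ?_⟩
  · refine hX.1.mem_of_tendsto (f := B) (b := atTop) ?_ (Eventually.of_forall hB1)
    rw [tendsto_pi_nhds]
    intro i
    apply tendsto_const_nhds.congr'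
    filter_upwards [eventually_ge_atTop (i.natAbs + 1)] with n hn
    exact (hB2 n i (by omega) (by omega)).symm
  · have : ∀ (n : ℕ) (x : ℤ → A), shift^[n] x = fun i => x (i + n) := by
      intro n
      induction n with
      | zero => intro x; simp
      | succ n ih => intro x; rw [Function.iterate_succ_apply, ih]; funext i; simp [shift, add_assoc]
    rw [this]
    funext i
    simp [hq]

/-- Two equal words ending at positions with no constraints of intermediate lengths
produce a periodic point. -/
theorem periodic_of_repeat [TopologicalSpace A] [DiscreteTopology A]
    {X : Set (ℤ → A)} (hX : IsSubshift X) {x : ℤ → A} (hx : x ∈ X) (l : ℕ) (hl : 1 ≤ l)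
    (e : ℤ) (p : ℕ) (hp : 1 ≤ p) (hw : wd x (e - l) l = wd x (e + p - l) l)
    (h : ∀ n : ℕ, l < n → n ≤ l + p → ¬ IsLeftConstraint X (wd x (e + p - n) n)) :
    ∃ x ∈ X, ∃ n : ℕ, 1 ≤ n ∧ shift^[n] x = x := by
  have hs := fol_wd_stable hX.2 hx (e + p) l p h
  rw [← hw, show e + p - ((l + p : ℕ) : ℤ) = e - l by push_cast; ring] at hs
  refine periodic_of_loop hX (fol_wd_nonempty hX.2 hx (e - l) l) ?_ p hp
    (fun i => x (e - 1 + i)) ?_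
  · intro y hy
    rw [mem_fol_wd] at hy
    obtain ⟨B, hB, -, h2⟩ := hy
    exact ⟨tr ((l : ℤ) - 1) B, tr_mem hX.2 hB _, h2⟩
  · intro y hy
    rw [← hs, mem_fol_wd] at hy
    obtain ⟨B, hB, h1, h2⟩ := hy
    refine ⟨fun k => B ((l : ℤ) - 1 + k), ?_, ?_, ?_⟩
    · rw [mem_fol_wd]
      exact ⟨B, hB, fun i hi => h1 i (by omega), fun k => rfl⟩
    · intro i hi
      have := h1 (l - 1 + i) (by omega)
      have e1 : ((l - 1 + i : ℕ) : ℤ) = (l : ℤ) - 1 + i := by omega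
      rw [e1] at this
      simp only
      rw [this]
      congr 1; ring
    · intro k
      rw [h2]
      simp only
      congr 1; push_cast; ring

/-- Number of positions without constraints of lengths in `(l, l+q]`. -/
theorem visits_bound [Fintype A] [TopologicalSpace A] [DiscreteTopology A]
    {X : Set (ℤ → A)} (hX : IsSubshift X)
    (hno : ¬ ∃ x ∈ X, ∃ n : ℕ, 1 ≤ n ∧ shift^[n] x = x)
    {x : ℤ → A} (hx : x ∈ X) (l : ℕ) (hl : 1 ≤ l) (q : ℕ) (hq : 1 ≤ q) (n : ℕ)
    (P : ℕ → Prop) [DecidablePred P]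
    (hP : ∀ k, P k → ∀ m : ℕ, l < m → m ≤ l + q →
      ¬ IsLeftConstraint X (wd x ((k : ℤ) + 1 - m) m)) :
    ((Finset.range n).filter P).card ≤ (n / q + 1) * Fintype.card A ^ l := by
  classical
  have hlt : ∀ k k' : ℕ, P k' → k < k' → k / q = k' / q →
      wd x ((k : ℤ) + 1 - l) l = wd x ((k' : ℤ) + 1 - l) l → False := by
    intro k k' hk' hkk hd hw
    apply hno
    obtain ⟨p, rfl⟩ := Nat.exists_eq_add_of_le hkk.le
    have hpq : p < q := by
      have h1 := Nat.div_add_mod k q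
      have h2 := Nat.div_add_mod (k + p) q
      rw [← hd] at h2
      have h3 := Nat.mod_lt (k + p) (show 0 < q by omega)
      omega
    refine periodic_of_repeat hX hx l hl ((k : ℤ) + 1) p (by omega) ?_ ?_
    · rw [hw]; congr 1; push_cast; ring
    · intro m h1 h2
      have := hP _ hk' m h1 (by omega)
      convert this using 3
      push_cast; ring
  have hcard : ((Finset.range (n / q + 1)) ×ˢ (Finset.univ : Finset (Fin l → A))).card
      = (n / q + 1) * Fintype.card A ^ l := by
    simp [Finset.card_product]
  rw [← hcard]
  refine Finset.card_le_card_of_injOn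
    (fun k : ℕ => (k / q, fun i : Fin l => x ((k : ℤ) + 1 - l + (i : ℕ)))) ?_ ?_
  · intro k hk
    have : k < n := by simp at hk; exact hk.1
    simp only [Finset.coe_product, Set.mem_prod, Finset.mem_coe, Finset.mem_range,
      Finset.mem_univ, and_true]
    exact Nat.lt_succ_of_le (Nat.div_le_div_right this.le)
  · intro k hk k' hk' hkk
    simp only [Finset.coe_filter, Set.mem_ofPred_eq] at hk hk'
    simp only [Prod.mk.injEq] at hkk
    have hw : wd x ((k : ℤ) + 1 - l) l = wd x ((k' : ℤ) + 1 - l) l := by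
      rw [wd_eq_iff]
      intro i hi
      exact congrFun hkk.2 ⟨i, hi⟩
    rcases lt_trichotomy k k' with h | h | h
    · exact (hlt k k' hk'.2 h hkk.1 hw).elim
    · exact h
    · exact (hlt k' k hk.2 h hkk.1.symm hw.symm).elim

/-! ### Counting -/

theorem finite_words [Finite A] {S : Set (List A)} {n : ℕ} (h : ∀ w ∈ S, w.length = n) :
    S.Finite :=
  (List.finite_length_eq A n).subset h

theorem ncard_words_le [Fintype A] {S : Set (List A)} {n : ℕ} (h : ∀ w ∈ S, w.length = n) :
    S.ncard ≤ Fintype.card A ^ n := by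
  classical
  have hsub : S ⊆ (fun f : Fin n → A => List.ofFn f) '' Set.univ := by
    intro w hw
    have := h w hw
    subst this
    exact ⟨w.get, trivial, by simp⟩
  calc S.ncard ≤ ((fun f : Fin n → A => List.ofFn f) '' Set.univ).ncard :=
        Set.ncard_le_ncard hsub (Set.toFinite _)
    _ ≤ (Set.univ : Set (Fin n → A)).ncard := Set.ncard_image_le (Set.toFinite _)
    _ = Fintype.card A ^ n := by simp [Set.ncard_univ]

theorem ncard_append_le {S T : Set (List A)} (hS : S.Finite) (hT : T.Finite) :
    ((fun p : List A × List A => p.1 ++ p.2) '' (S ×ˢ T)).ncard ≤ S.ncard * T.ncard := by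
  rw [← Set.ncard_prod]
  exact Set.ncard_image_le (hS.prod hT)

/-- Position `k` of `x` is the end of a word of `E` of length in `(l, M]`. -/
def GoodPos (E : ℕ → Set (List A)) (l M : ℕ) (x : ℤ → A) (k : ℕ) : Prop :=
  ∃ m, l < m ∧ m ≤ M ∧ wd x ((k : ℤ) + 1 - m) m ∈ E m

open Classical in
/-- Words of length `n` of points of `X` having at most `j` bad positions. -/
def SW (X : Set (ℤ → A)) (E : ℕ → Set (List A)) (l M n j : ℕ) : Set (List A) :=
  {w | ∃ x ∈ X, w = wd x 0 n ∧
    ((Finset.range n).filter fun k => ¬ GoodPos E l M x k).card ≤ j}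

theorem SW_length {X : Set (ℤ → A)} {E : ℕ → Set (List A)} {l M n j : ℕ} :
    ∀ w ∈ SW X E l M n j, w.length = n := by
  rintro w ⟨x, -, rfl, -⟩
  exact wd_length _ _ _

theorem SW_step (X : Set (ℤ → A)) (E : ℕ → Set (List A)) (l M n j : ℕ) (hn : M ≤ n)
    (w : List A) (hw : w ∈ SW X E l M (n + 1) j) :
    (w ∈ ⋃ m ∈ Finset.Ioc l M,
      (fun p : List A × List A => p.1 ++ p.2) '' (SW X E l M (n + 1 - m) j ×ˢ E m)) ∨
    (1 ≤ j ∧ w ∈ (fun p : List A × List A => p.1 ++ p.2) ''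
      (SW X E l M n (j - 1) ×ˢ {u : List A | u.length = 1})) := by
  classical
  obtain ⟨x, hx, rfl, hc⟩ := hw
  by_cases hg : GoodPos E l M x n
  · left
    obtain ⟨m, h1, h2, h3⟩ := hg
    simp only [Set.mem_iUnion]
    refine ⟨m, by simp [h1, h2], (wd x 0 (n + 1 - m), wd x ((n : ℤ) + 1 - m) m), ⟨?_, h3⟩, ?_⟩
    · refine ⟨x, hx, rfl, le_trans (Finset.card_le_card ?_) hc⟩
      apply Finset.filter_subset_filter
      intro i hi
      simp only [Finset.mem_range] at hi ⊢
      omega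
    · have := wd_add x 0 (n + 1 - m) m
      rw [Nat.sub_add_cancel (by omega)] at this
      rw [this]
      simp only
      congr 2
      omega
  · right
    have hcard : ((Finset.range n).filter fun k => ¬ GoodPos E l M x k).card + 1 ≤ j := by
      refine le_trans ?_ hc
      rw [Finset.range_add_one, Finset.filter_insert, if_pos hg, Finset.card_insert_of_notMem]
      simp
    refine ⟨by omega, (wd x 0 n, wd x n 1), ⟨⟨x, hx, rfl, by omega⟩, wd_length _ _ _⟩, ?_⟩
    rw [wd_add]
    simp

theorem SW_bound [Fintype A] (X : Set (ℤ → A)) (E : ℕ → Set (List A))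
    (hE : ∀ m, ∀ w ∈ E m, w.length = m) (l M : ℕ) (a b D : ℝ) (hb : 0 ≤ b)
    (hD : 1 ≤ D) (hDA : (Fintype.card A : ℝ) ≤ D)
    (hcount : ∀ m, l < m → ((E m).ncard : ℝ) ≤ Real.exp (a * m))
    (htail : ∑ m ∈ Finset.Ioc l M, Real.exp (a - b) ^ m ≤ 1 / 2) (n j : ℕ) :
    ((SW X E l M n j).ncard : ℝ) ≤ D ^ M * (2 * D) ^ j * Real.exp (b * n) := by
  induction n using Nat.strong_induction_on generalizing j with
  | _ n ih =>
  have hD0 : 0 < D := by linarith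
  by_cases hnM : n ≤ M
  · have h1 : ((SW X E l M n j).ncard : ℝ) ≤ (Fintype.card A : ℝ) ^ n := by
      exact_mod_cast ncard_words_le SW_length
    have h2 : (Fintype.card A : ℝ) ^ n ≤ D ^ M :=
      (pow_le_pow_left₀ (by positivity) hDA n).trans (pow_le_pow_right₀ hD hnM)
    have h3 : 1 ≤ (2 * D) ^ j := one_le_pow₀ (by linarith)
    have h4 : 1 ≤ Real.exp (b * n) := Real.one_le_exp (by positivity)
    calc ((SW X E l M n j).ncard : ℝ) ≤ D ^ M := h1.trans h2
      _ ≤ D ^ M * (2 * D) ^ j := le_mul_of_one_le_right (by positivity) h3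
      _ ≤ _ := le_mul_of_one_le_right (by positivity) h4
  · obtain ⟨n, rfl⟩ : ∃ k, n = k + 1 := ⟨n - 1, by omega⟩
    set U : Set (List A) := ⋃ m ∈ Finset.Ioc l M,
      (fun p : List A × List A => p.1 ++ p.2) '' (SW X E l M (n + 1 - m) j ×ˢ E m) with hU
    set V : Set (List A) := {w | 1 ≤ j ∧ w ∈ (fun p : List A × List A => p.1 ++ p.2) ''
      (SW X E l M n (j - 1) ×ˢ {u : List A | u.length = 1})} with hV
    have fin1 : ∀ m, (E m).Finite := fun m => finite_words (hE m)
    have fin2 : ∀ n j, (SW X E l M n j).Finite := fun n j => finite_words SW_length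
    have fin3 : ({u : List A | u.length = 1}).Finite := List.finite_length_eq A 1
    have hUf : U.Finite := by
      rw [hU]
      exact (Finset.Ioc l M).finite_toSet.biUnion fun m _ => ((fin2 _ _).prod (fin1 m)).image _
    have hVf : V.Finite := (((fin2 _ _).prod fin3).image _).subset fun w hw => hw.2
    have hsub : SW X E l M (n + 1) j ⊆ U ∪ V := by
      intro w hw
      exact SW_step X E l M n j (by omega) w hw
    have hUb : (U.ncard : ℝ) ≤ D ^ M * (2 * D) ^ j * Real.exp (b * (n + 1 : ℕ)) * (1 / 2) := by
      calc (U.ncard : ℝ) ≤ ((∑ m ∈ Finset.Ioc l M,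
          ((fun p : List A × List A => p.1 ++ p.2) ''
            (SW X E l M (n + 1 - m) j ×ˢ E m)).ncard : ℕ) : ℝ) := by
            exact_mod_cast Finset.set_ncard_biUnion_le _ _
        _ ≤ ∑ m ∈ Finset.Ioc l M, D ^ M * (2 * D) ^ j * Real.exp (b * (n + 1 : ℕ)) *
              Real.exp (a - b) ^ m := by
            rw [Nat.cast_sum]
            apply Finset.sum_le_sum
            intro m hm
            simp only [Finset.mem_Ioc] at hm
            have h1 := ih (n + 1 - m) (by omega) j
            have h2 := hcount m hm.1
            have h3 : (((fun p : List A × List A => p.1 ++ p.2) ''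
              (SW X E l M (n + 1 - m) j ×ˢ E m)).ncard : ℝ) ≤
                ((SW X E l M (n + 1 - m) j).ncard : ℝ) * ((E m).ncard : ℝ) := by
              exact_mod_cast ncard_append_le (fin2 _ _) (fin1 m)
            refine h3.trans ((mul_le_mul h1 h2 (by positivity) (by positivity)).trans ?_)
            rw [← Real.exp_nat_mul, mul_assoc (_ * _), mul_assoc (_ * _), ← Real.exp_add,
              ← Real.exp_add]
            apply le_of_eq
            congr 2
            rw [Nat.cast_sub (by omega)]
            ring
        _ = D ^ M * (2 * D) ^ j * Real.exp (b * (n + 1 : ℕ)) *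
              ∑ m ∈ Finset.Ioc l M, Real.exp (a - b) ^ m := by rw [Finset.mul_sum]
        _ ≤ _ := mul_le_mul_of_nonneg_left htail (by positivity)
    have hVb : (V.ncard : ℝ) ≤ D ^ M * (2 * D) ^ j * Real.exp (b * (n + 1 : ℕ)) * (1 / 2) := by
      rcases j with _ | j
      · have : V = ∅ := by ext w; simp [hV]
        rw [this]
        simp only [Set.ncard_empty, Nat.cast_zero]
        positivity
      · have h0 : V.ncard ≤ ((fun p : List A × List A => p.1 ++ p.2) ''
            (SW X E l M n j ×ˢ {u : List A | u.length = 1})).ncard :=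
          Set.ncard_le_ncard (fun w hw => hw.2) (((fin2 _ _).prod fin3).image _)
        have h1 := h0.trans (ncard_append_le (fin2 n j) fin3)
        have h2 : (({u : List A | u.length = 1}).ncard : ℝ) ≤ D := by
          refine le_trans ?_ hDA
          have := ncard_words_le (S := {u : List A | u.length = 1}) (n := 1) (fun w hw => hw)
          rw [pow_one] at this
          exact_mod_cast this
        have h3 : (V.ncard : ℝ) ≤ ((SW X E l M n j).ncard : ℝ) *
            (({u : List A | u.length = 1}).ncard : ℝ) := by exact_mod_cast h1
        have h4 := ih n (by omega) j
        refine h3.trans ((mul_le_mul h4 h2 (by positivity) (by positivity)).trans ?_)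
        have h5 : Real.exp (b * n) ≤ Real.exp (b * (n + 1 : ℕ)) := by
          apply Real.exp_le_exp.mpr
          push_cast
          nlinarith
        calc D ^ M * (2 * D) ^ j * Real.exp (b * n) * D
            = D ^ M * (2 * D) ^ (j + 1) * (1 / 2) * Real.exp (b * n) := by ring
          _ ≤ D ^ M * (2 * D) ^ (j + 1) * (1 / 2) * Real.exp (b * (n + 1 : ℕ)) :=
              mul_le_mul_of_nonneg_left h5 (by positivity)
          _ = _ := by ring
    have hle : (SW X E l M (n + 1) j).ncard ≤ U.ncard + V.ncard :=
      (Set.ncard_le_ncard hsub (hUf.union hVf)).trans (Set.ncard_union_le _ _)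
    have hle' : ((SW X E l M (n + 1) j).ncard : ℝ) ≤ U.ncard + V.ncard := by exact_mod_cast hle
    linarith

/-! ### Compactness -/

theorem isOpen_wd [TopologicalSpace A] [DiscreteTopology A] (P : List A → Prop) (s : ℤ) (n : ℕ) :
    IsOpen {x : ℤ → A | P (wd x s n)} := by
  have hc : Continuous fun (x : ℤ → A) (i : Fin n) => x (s + (i : ℕ)) := by fun_prop
  have : {x : ℤ → A | P (wd x s n)} =
      (fun (x : ℤ → A) (i : Fin n) => x (s + (i : ℕ))) ⁻¹' {f | P (List.ofFn f)} := by
    ext x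
    have : wd x s n = List.ofFn fun i : Fin n => x (s + (i : ℕ)) := by
      apply List.ext_getElem <;> simp [wd]
    simp [this]
  rw [this]
  exact (isOpen_discrete _).preimage hc

/-- Positions with no left constraint of length in `(l, l + q]`. -/
def BadPos (X : Set (ℤ → A)) (l q : ℕ) (x : ℤ → A) (k : ℕ) : Prop :=
  ∀ m : ℕ, l < m → m ≤ l + q → ¬ IsLeftConstraint X (wd x ((k : ℤ) + 1 - m) m)

theorem cover [Fintype A] [TopologicalSpace A] [DiscreteTopology A]
    {X : Set (ℤ → A)} (hX : IsSubshift X) (l : ℕ) (q : ℕ → ℕ) :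
    ∃ N : ℕ, ∀ x ∈ X, ∀ k : ℕ, GoodPos (ELC X) l N x k ∨
      ∃ i < N, BadPos X (i + 1) (q i) x k := by
  have hcomp : IsCompact X := hX.1.isCompact
  set O : ℕ → Set (ℤ → A) := fun N =>
    {x | GoodPos (ELC X) l N x 0 ∨ ∃ i < N, BadPos X (i + 1) (q i) x 0} with hO
  have hopen : ∀ N, IsOpen (O N) := by
    intro N
    have h1 : IsOpen {x : ℤ → A | GoodPos (ELC X) l N x 0} := by
      have : {x : ℤ → A | GoodPos (ELC X) l N x 0} =
          ⋃ m : ℕ, {x | (fun w => l < m ∧ m ≤ N ∧ w ∈ ELC X m)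
            (wd x (((0 : ℕ) : ℤ) + 1 - m) m)} := by
        ext x; simp [GoodPos]
      rw [this]
      exact isOpen_iUnion fun m => isOpen_wd (fun w => l < m ∧ m ≤ N ∧ w ∈ ELC X m) _ _
    have h2 : IsOpen {x : ℤ → A | ∃ i < N, BadPos X (i + 1) (q i) x 0} := by
      have : {x : ℤ → A | ∃ i < N, BadPos X (i + 1) (q i) x 0} =
          ⋃ i : ℕ, ⋃ _ : i < N, ⋂ m ∈ Finset.Ioc (i + 1) (i + 1 + q i),
            {x | (fun w => ¬ IsLeftConstraint X w) (wd x (((0 : ℕ) : ℤ) + 1 - m) m)} := by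
        ext x; simp [BadPos]
      rw [this]
      exact isOpen_iUnion fun i => isOpen_iUnion fun _ =>
        isOpen_biInter_finset fun m _ => isOpen_wd (fun w => ¬ IsLeftConstraint X w) _ _
    exact h1.union h2
  have hmono : Monotone O := by
    intro N N' hNN x hx
    rcases hx with ⟨m, h1, h2, h3⟩ | ⟨i, hi, hb⟩
    · exact Or.inl ⟨m, h1, h2.trans hNN, h3⟩
    · exact Or.inr ⟨i, hi.trans_le hNN, hb⟩
  have hcov : X ⊆ ⋃ N, O N := by
    intro x hx
    rw [Set.mem_iUnion]
    by_cases hinf : ∀ N : ℕ, ∃ m, N ≤ m ∧ IsLeftConstraint X (wd x (0 - m) (m + 1))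
    · obtain ⟨m, hm, hlc⟩ := hinf l
      refine ⟨m + 1, Or.inl ⟨m + 1, by omega, le_rfl, ?_⟩⟩
      rw [show (((0 : ℕ) : ℤ) + 1 - ((m + 1 : ℕ) : ℤ)) = 0 - m by push_cast; ring]
      refine ⟨wd_length _ _ _, hlc, fun j : ℕ => x (0 - j), ?_, ?_⟩
      · rw [wordOf_eq, wd_length]; simp
      · intro N
        obtain ⟨m', h1, h2⟩ := hinf N
        exact ⟨m', h1, by rw [wordOf_eq]; exact h2⟩
    · push Not at hinf
      obtain ⟨N, hN⟩ := hinf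
      refine ⟨N + 1, Or.inr ⟨N, by omega, ?_⟩⟩
      intro m h1 h2
      obtain ⟨m, rfl⟩ : ∃ k, m = k + 1 := ⟨m - 1, by omega⟩
      have := hN m (by omega)
      rwa [show (((0 : ℕ) : ℤ) + 1 - ((m + 1 : ℕ) : ℤ)) = 0 - m by push_cast; ring]
  obtain ⟨N, hN⟩ := hcomp.elim_directed_cover O hopen hcov hmono.directed_le
  refine ⟨N, fun x hx k => ?_⟩
  have := hN (tr_mem hX.2 hx k)
  have e : ∀ m : ℕ, wd (tr k x) (((0 : ℕ) : ℤ) + 1 - m) m = wd x ((k : ℤ) + 1 - m) m := by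
    intro m
    rw [wd_tr]
    congr 1
    push_cast; ring
  simpa only [hO, Set.mem_ofPred_eq, GoodPos, BadPos, e] using this

/-! ### Entropy -/

theorem rate_bounds [Fintype A] (S : ℕ → Set (List A)) (hS : ∀ n, ∀ w ∈ S n, w.length = n)
    (n : ℕ) : 0 ≤ Real.log (Nat.card ↥(S n)) / (n : ℝ) ∧
      Real.log (Nat.card ↥(S n)) / (n : ℝ) ≤ Real.log (Fintype.card A + 1) := by
  rw [Nat.card_coe_set_eq]
  have hD : 0 ≤ Real.log ((Fintype.card A : ℝ) + 1) :=
    Real.log_nonneg (by linarith [(Nat.cast_nonneg (Fintype.card A) : (0 : ℝ) ≤ _)])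
  refine ⟨div_nonneg (Real.log_natCast_nonneg _) (by positivity), ?_⟩
  apply div_le_of_le_mul₀ (by positivity) hD
  rcases Nat.eq_zero_or_pos (S n).ncard with h0 | h0
  · rw [h0]; simp; positivity
  · have h1 : ((S n).ncard : ℝ) ≤ ((Fintype.card A : ℝ) + 1) ^ n := by
      have : ((S n).ncard : ℝ) ≤ (Fintype.card A : ℝ) ^ n := by
        exact_mod_cast ncard_words_le (hS n)
      exact this.trans (pow_le_pow_left₀ (by positivity) (by linarith) n)
    calc Real.log ((S n).ncard : ℝ) ≤ Real.log (((Fintype.card A : ℝ) + 1) ^ n) :=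
          Real.log_le_log (by exact_mod_cast h0) h1
      _ = _ := by rw [Real.log_pow]; ring

theorem rate_bdd [Fintype A] (S : ℕ → Set (List A)) (hS : ∀ n, ∀ w ∈ S n, w.length = n) :
    IsBoundedUnder (· ≤ ·) atTop fun n : ℕ => Real.log (Nat.card ↥(S n)) / (n : ℝ) :=
  isBoundedUnder_of ⟨_, fun n => (rate_bounds S hS n).2⟩

theorem rate_cobdd [Fintype A] (S : ℕ → Set (List A)) (hS : ∀ n, ∀ w ∈ S n, w.length = n) :
    IsCoboundedUnder (· ≤ ·) atTop fun n : ℕ => Real.log (Nat.card ↥(S n)) / (n : ℝ) :=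
  IsBoundedUnder.isCoboundedUnder_le (isBoundedUnder_of ⟨0, fun n => (rate_bounds S hS n).1⟩)

theorem ELC_length (X : Set (ℤ → A)) : ∀ n, ∀ w ∈ ELC X n, w.length = n := fun _ _ h => h.1

theorem Lang_length (X : Set (ℤ → A)) : ∀ n, ∀ w ∈ Lang X n, w.length = n := fun _ _ h => h.1

theorem hCstar_nonneg [Fintype A] (X : Set (ℤ → A)) : 0 ≤ hCstar X :=
  le_limsup_of_frequently_le
    (Eventually.of_forall fun n => (rate_bounds _ (ELC_length X) n).1).frequently
    (rate_bdd _ (ELC_length X))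

theorem exists_tail (r : ℝ) (h0 : 0 < r) (h1 : r < 1) (n₀ : ℕ) :
    ∃ l, n₀ ≤ l ∧ ∀ M, ∑ m ∈ Finset.Ioc l M, r ^ m ≤ 1 / 2 := by
  have ht := tendsto_pow_atTop_nhds_zero_of_lt_one h0.le h1
  have hpos : 0 < (1 - r) / 2 := by linarith
  obtain ⟨l, hl1, hl2⟩ := ((ht.eventually_lt_const hpos).and (eventually_ge_atTop n₀)).exists
  refine ⟨l, hl2, fun M => ?_⟩
  calc ∑ m ∈ Finset.Ioc l M, r ^ m ≤ ∑ m ∈ Finset.Ico l (M + 1), r ^ m := by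
        apply Finset.sum_le_sum_of_subset_of_nonneg
        · intro m hm
          simp only [Finset.mem_Ioc, Finset.mem_Ico] at hm ⊢
          omega
        · intros; positivity
    _ ≤ r ^ l / (1 - r) := geom_sum_Ico_le_of_lt_one h0.le h1
    _ ≤ 1 / 2 := by
        rw [div_le_iff₀ (by linarith)]
        linarith

open Classical in
/-- Uniformly few bad positions. -/
theorem few_bad [Fintype A] [TopologicalSpace A] [DiscreteTopology A]
    {X : Set (ℤ → A)} (hX : IsSubshift X)
    (hno : ¬ ∃ x ∈ X, ∃ n : ℕ, 1 ≤ n ∧ shift^[n] x = x) (l : ℕ) (ε : ℝ) (hε : 0 < ε) :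
    ∃ (M : ℕ) (C : ℝ), 0 ≤ C ∧ ∀ x ∈ X, ∀ n : ℕ,
      (((Finset.range n).filter fun k => ¬ GoodPos (ELC X) l M x k).card : ℝ) ≤ ε * n + C := by
  have hq : ∀ i : ℕ, ∃ q : ℕ, 1 ≤ q ∧
      (Fintype.card A : ℝ) ^ (i + 1) / q ≤ ε / 2 * (1 / 2) ^ i := by
    intro i
    obtain ⟨q, hq⟩ := exists_nat_gt ((Fintype.card A : ℝ) ^ (i + 1) / (ε / 2 * (1 / 2) ^ i))
    have hq0 : (0 : ℝ) < q := lt_of_le_of_lt (by positivity) hq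
    refine ⟨q, by exact_mod_cast hq0, ?_⟩
    rw [div_le_iff₀ hq0]
    rw [div_lt_iff₀ (by positivity)] at hq
    linarith
  choose q hq1 hq2 using hq
  obtain ⟨N, hN⟩ := cover hX l q
  refine ⟨N, ∑ i ∈ Finset.range N, (Fintype.card A : ℝ) ^ (i + 1), by positivity, ?_⟩
  intro x hx n
  have hsub : ((Finset.range n).filter fun k => ¬ GoodPos (ELC X) l N x k) ⊆
      (Finset.range N).biUnion fun i =>
        (Finset.range n).filter fun k => BadPos X (i + 1) (q i) x k := by
    intro k hk
    simp only [Finset.mem_filter, Finset.mem_biUnion, Finset.mem_range] at hk ⊢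
    rcases hN x hx k with h | ⟨i, hi, hb⟩
    · exact (hk.2 h).elim
    · exact ⟨i, hi, hk.1, hb⟩
  have h1 := (Finset.card_le_card hsub).trans Finset.card_biUnion_le
  have h2 : ∀ i ∈ Finset.range N,
      (((Finset.range n).filter fun k => BadPos X (i + 1) (q i) x k).card : ℝ) ≤
        ε / 2 * n * (1 / 2) ^ i + (Fintype.card A : ℝ) ^ (i + 1) := by
    intro i _
    have h3 := visits_bound hX hno hx (i + 1) (by omega) (q i) (hq1 i) n
      (fun k => BadPos X (i + 1) (q i) x k) (fun k hk => hk)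
    have h4 : (((Finset.range n).filter fun k => BadPos X (i + 1) (q i) x k).card : ℝ) ≤
        (((n / q i : ℕ) : ℝ) + 1) * (Fintype.card A : ℝ) ^ (i + 1) := by exact_mod_cast h3
    have h5 : ((n / q i : ℕ) : ℝ) ≤ (n : ℝ) / q i := Nat.cast_div_le
    have h6 := mul_le_mul_of_nonneg_left (hq2 i) (Nat.cast_nonneg n : (0 : ℝ) ≤ n)
    have h7 : ((n / q i : ℕ) : ℝ) * (Fintype.card A : ℝ) ^ (i + 1) ≤
        (n : ℝ) / q i * (Fintype.card A : ℝ) ^ (i + 1) :=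
      mul_le_mul_of_nonneg_right h5 (by positivity)
    have h8 : (n : ℝ) / q i * (Fintype.card A : ℝ) ^ (i + 1) =
      n * ((Fintype.card A : ℝ) ^ (i + 1) / q i) := by ring
    linarith
  have h9 := Finset.sum_le_sum h2
  rw [Finset.sum_add_distrib, ← Finset.mul_sum] at h9
  have h10 := sum_geometric_two_le N
  have h11 : ε / 2 * n * ∑ i ∈ Finset.range N, (1 / 2 : ℝ) ^ i ≤ ε / 2 * n * 2 :=
    mul_le_mul_of_nonneg_left h10 (by positivity)
  have h12 : (((Finset.range n).filter fun k => ¬ GoodPos (ELC X) l N x k).card : ℝ) ≤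
      ∑ i ∈ Finset.range N,
        (((Finset.range n).filter fun k => BadPos X (i + 1) (q i) x k).card : ℝ) := by
    exact_mod_cast h1
  linarith

theorem forward [Fintype A] [TopologicalSpace A] [DiscreteTopology A]
    {X : Set (ℤ → A)} (hX : IsSubshift X) (hlt : hCstar X < hTop X) :
    ∃ x ∈ X, ∃ n : ℕ, 1 ≤ n ∧ shift^[n] x = x := by
  classical
  by_contra hno
  obtain ⟨a, ha1, ha2⟩ := exists_between hlt
  obtain ⟨b, hb1, hb2⟩ := exists_between ha2
  obtain ⟨c, hc1, hc2⟩ := exists_between hb2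
  have ha0 : 0 < a := (hCstar_nonneg X).trans_lt ha1
  have hev := eventually_lt_of_limsup_lt ha1 (rate_bdd _ (ELC_length X))
  obtain ⟨n₀, hn₀⟩ := eventually_atTop.mp hev
  obtain ⟨l, hl, htail⟩ := exists_tail (Real.exp (a - b)) (Real.exp_pos _)
    (Real.exp_lt_one_iff.mpr (by linarith)) n₀
  have hcount : ∀ m, l < m → ((ELC X m).ncard : ℝ) ≤ Real.exp (a * m) := by
    intro m hm
    have h1 := hn₀ m (by omega)
    rw [Nat.card_coe_set_eq, div_lt_iff₀ (by exact_mod_cast (by omega : 0 < m))] at h1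
    rcases Nat.eq_zero_or_pos (ELC X m).ncard with h0 | h0
    · rw [h0]; simp; positivity
    · exact ((Real.log_lt_iff_lt_exp (by exact_mod_cast h0)).mp h1).le
  set D : ℝ := (Fintype.card A : ℝ) + 1 with hD
  have hD1 : 1 ≤ D := by rw [hD]; linarith [(Nat.cast_nonneg (Fintype.card A) : (0 : ℝ) ≤ _)]
  have hlogD : 0 < Real.log (2 * D) := Real.log_pos (by linarith)
  obtain ⟨M, C, hC, hfew⟩ := few_bad hX hno l ((c - b) / 2 / Real.log (2 * D))
    (by have : 0 < c - b := by linarith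
        positivity)
  set ε := (c - b) / 2 / Real.log (2 * D) with hε
  have hε0 : 0 < ε := by
    have : 0 < c - b := by linarith
    positivity
  have hεl : ε * Real.log (2 * D) = (c - b) / 2 := by rw [hε]; field_simp
  -- the bound for the language
  have hlang : ∀ n : ℕ, Real.log ((Lang X n).ncard : ℝ) ≤
      (M * Real.log D + C * Real.log (2 * D)) + ((b + c) / 2) * n := by
    intro n
    set j := ⌊ε * n + C⌋₊ with hj
    have hsub : Lang X n ⊆ SW X (ELC X) l M n j := by
      rw [lang_eq]
      rintro w ⟨x, hx, rfl⟩
      exact ⟨x, hx, rfl, Nat.le_floor (hfew x hx n)⟩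
    have h1 : ((Lang X n).ncard : ℝ) ≤ D ^ M * (2 * D) ^ j * Real.exp (b * n) := by
      refine le_trans ?_ (SW_bound X (ELC X) (ELC_length X) l M a b D (by linarith) hD1
        (by rw [hD]; linarith) hcount (htail M) n j)
      exact_mod_cast Set.ncard_le_ncard hsub (finite_words SW_length)
    have hlogD' : 0 ≤ Real.log D := Real.log_nonneg hD1
    rcases Nat.eq_zero_or_pos (Lang X n).ncard with h0 | h0
    · rw [h0]
      simp only [Nat.cast_zero, Real.log_zero]
      have : 0 < b + c := by linarith
      positivity
    · have h2 := Real.log_le_log (by exact_mod_cast h0) h1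
      rw [Real.log_mul (by positivity) (by positivity), Real.log_mul (by positivity)
        (by positivity), Real.log_pow, Real.log_pow, Real.log_exp] at h2
      have h3 : (j : ℝ) ≤ ε * n + C := Nat.floor_le (by positivity)
      have h4 := mul_le_mul_of_nonneg_right h3 hlogD.le
      have h5 : (ε * n + C) * Real.log (2 * D) = (c - b) / 2 * n + C * Real.log (2 * D) := by
        rw [← hεl]; ring
      linarith
  have hle : hTop X ≤ c := by
    apply limsup_le_of_le (rate_cobdd _ (Lang_length X))
    obtain ⟨n₁, hn₁⟩ := exists_nat_gt ((M * Real.log D + C * Real.log (2 * D)) / ((c - b) / 2))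
    filter_upwards [eventually_ge_atTop (n₁ + 1)] with n hn
    have hn0 : (0 : ℝ) < n := by exact_mod_cast (by omega : 0 < n)
    have hnn : (n₁ : ℝ) ≤ n := by exact_mod_cast (by omega : n₁ ≤ n)
    rw [Nat.card_coe_set_eq, div_le_iff₀ hn0]
    rw [div_lt_iff₀ (by linarith)] at hn₁
    have h1 := hlang n
    have h2 : (n₁ : ℝ) * ((c - b) / 2) ≤ n * ((c - b) / 2) :=
      mul_le_mul_of_nonneg_right hnn (by linarith)
    linarith
  linarith

/-! ### Reversal -/

theorem rev_subshift [TopologicalSpace A] {X : Set (ℤ → A)} (hX : IsSubshift X) :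
    IsSubshift (rev X) := by
  have hrev : rev X = (fun (x : ℤ → A) (n : ℤ) => x (-n)) ⁻¹' X := by
    ext y
    constructor
    · rintro ⟨x, hx, rfl⟩
      simpa using hx
    · intro hy
      exact ⟨_, hy, by simp⟩
  constructor
  · rw [hrev]
    exact hX.1.preimage (by fun_prop)
  · ext y
    constructor
    · rintro ⟨z, ⟨x, hx, rfl⟩, rfl⟩
      refine ⟨tr (-1) x, tr_mem hX.2 hx _, ?_⟩
      funext n
      simp only [tr, shift]
      congr 1; ring
    · rintro ⟨x, hx, rfl⟩
      refine ⟨_, ⟨tr 1 x, tr_mem hX.2 hx _, rfl⟩, ?_⟩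
      funext n
      simp only [tr, shift]
      congr 1; ring

theorem hTop_rev {X : Set (ℤ → A)} (hX : shift '' X = X) : hTop (rev X) = hTop X := by
  unfold hTop
  have : ∀ n, Nat.card ↥(Lang (rev X) n) = Nat.card ↥(Lang X n) := by
    intro n
    have : Lang (rev X) n = List.reverse '' Lang X n := by
      rw [lang_eq, lang_eq]
      ext w
      constructor
      · rintro ⟨_, ⟨x, hx, rfl⟩, rfl⟩
        refine ⟨_, ⟨tr (1 - n) x, tr_mem hX hx _, rfl⟩, ?_⟩
        rw [wd_tr, wd_reverse]
        congr 1; ring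
      · rintro ⟨_, ⟨x, hx, rfl⟩, rfl⟩
        refine ⟨_, ⟨tr ((n : ℤ) - 1) x, tr_mem hX hx _, rfl⟩, ?_⟩
        rw [wd_reverse, wd_eq_iff]
        intro i _
        simp only [tr]
        congr 1; ring
    rw [this, Nat.card_coe_set_eq, Nat.card_coe_set_eq]
    exact Set.ncard_image_of_injective _ List.reverse_injective
  simp only [this]

theorem shift_iterate (n : ℕ) (x : ℤ → A) : shift^[n] x = fun i => x (i + n) := by
  induction n generalizing x with
  | zero => simp
  | succ n ih => rw [Function.iterate_succ_apply, ih]; funext i; simp [shift, add_assoc]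

theorem exists_periodic [Fintype A] [TopologicalSpace A] [DiscreteTopology A]
    {X : Set (ℤ → A)} (h : IsWeakQFT X) :
    ∃ x ∈ X, ∃ n : ℕ, 1 ≤ n ∧ shift^[n] x = x := by
  obtain ⟨hX, hlt⟩ := h
  rcases min_lt_iff.mp hlt with h1 | h1
  · exact forward hX h1
  · rw [← hTop_rev hX.2] at h1
    obtain ⟨_, ⟨x, hx, rfl⟩, n, hn, hp⟩ := forward (rev_subshift hX) h1
    refine ⟨x, hx, n, hn, ?_⟩
    rw [shift_iterate] at hp ⊢
    funext i
    have := congrFun hp (-i - n)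
    simp only at this
    rw [show -(-i - (n : ℤ) + n) = i by ring, show -(-i - (n : ℤ)) = i + n by ring] at this
    exact this.symm

/-! ### Non-minimality -/

theorem orbit_finite {p : ℤ → A} {n : ℕ} (hn : 1 ≤ n) (hp : shift^[n] p = p) :
    (orbit p).Finite := by
  have hper : Function.Periodic p (n : ℤ) := by
    intro i
    rw [shift_iterate] at hp
    exact congrFun hp i
  have hn' : (0 : ℤ) < n := by omega
  refine (Set.finite_range fun i : Fin n => tr (i : ℕ) p).subset ?_
  have key : ∀ k : ℤ, tr k p ∈ Set.range fun i : Fin n => tr (i : ℕ) p := by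
    intro k
    have h1 := Int.emod_nonneg k hn'.ne'
    have h2 := Int.emod_lt_of_pos k hn'
    refine ⟨⟨(k % n).toNat, by omega⟩, ?_⟩
    funext j
    simp only [tr, Int.toNat_of_nonneg h1]
    have h3 := Int.emod_add_mul_ediv k n
    have h4 := hper.int_mul (k / n) (k % n + j)
    rw [← h4]
    congr 1
    simp only [Int.cast_id]
    linarith
  rintro y ⟨m, hm | hm⟩
  · convert key m using 1
    rw [← hm, shift_iterate]
    funext i; simp [tr, add_comm]
  · convert key (-m) using 1
    rw [← hm, shift_iterate]
    funext i; simp only [tr]; congr 1; ring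

theorem hTop_finite [Fintype A] {X : Set (ℤ → A)} (hf : X.Finite) : hTop X ≤ 0 := by
  have hb : ∀ n : ℕ, Real.log (Nat.card ↥(Lang X n)) / (n : ℝ) ≤
      Real.log ((X.ncard : ℝ) + 1) / n := by
    intro n
    apply div_le_div_of_nonneg_right _ (by positivity)
    rw [Nat.card_coe_set_eq]
    rcases Nat.eq_zero_or_pos (Lang X n).ncard with h0 | h0
    · rw [h0]
      simp only [Nat.cast_zero, Real.log_zero]
      exact Real.log_nonneg (by linarith [(Nat.cast_nonneg X.ncard : (0 : ℝ) ≤ _)])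
    · apply Real.log_le_log (by exact_mod_cast h0)
      have : Lang X n = (fun x => wd x 0 n) '' X := by
        rw [lang_eq]; ext w; simp [eq_comm]
      have h2 : (Lang X n).ncard ≤ X.ncard := by
        rw [this]; exact Set.ncard_image_le hf
      have h3 : ((Lang X n).ncard : ℝ) ≤ X.ncard := by exact_mod_cast h2
      linarith
  have ht : Tendsto (fun n : ℕ => Real.log ((X.ncard : ℝ) + 1) / (n : ℝ)) atTop (nhds 0) :=
    tendsto_const_div_atTop_nhds_zero_nat _
  rw [← ht.limsup_eq]
  exact limsup_le_limsup (Eventually.of_forall hb) (rate_cobdd _ (Lang_length X))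
    ht.isBoundedUnder_le

/-- Every weak-QFT subshift contains a periodic point; in
particular a weak-QFT is never topologically minimal. -/
theorem weakQFT_has_periodic_point
    {A : Type*} [Fintype A] [TopologicalSpace A] [DiscreteTopology A]
    (X : Set (ℤ → A)) (h : IsWeakQFT X) :
    (∃ x ∈ X, ∃ n : ℕ, 1 ≤ n ∧ shift^[n] x = x) ∧ ¬ IsMinimal X := by
  have hper := exists_periodic h
  refine ⟨hper, fun hmin => ?_⟩
  obtain ⟨p, hp, n, hn, hpn⟩ := hper
  have hfin := orbit_finite hn hpn
  have hsub := hmin.2 p hp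
  rw [hfin.isClosed.closure_eq] at hsub
  have h1 := hTop_finite (hfin.subset hsub)
  have h2 : 0 ≤ hSCstar X := le_min (hCstar_nonneg X) (hCstar_nonneg (rev X))
  linarith [h.2]

end QFTPaper
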